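/- For the case K = 1: let L : ℝⁿ × ℝᵐ → ℝ be C², α > 0, b⁰ : ℝⁿ → ℝᵐ differentiable, and b¹(a) = b⁰(a) + α ∇_b L(a, b⁰(a)). Then d/da [L(a, b¹(a))] = ∂_a L(a, b¹(a)) + (Db⁰(a))ᵀ (I + α ∇²_{bb}L(a, b⁰(a)))ᵀ ∇_b L(a, b¹(a)) + α (∇²_{ab}L(a, b⁰(a)))ᵀ ∇_b L(a, b¹(a)). -/

import Mathlib

/-!
Everything reduces to the chain rule along a graph `x ↦ (x, g x)`: the total derivative of
`x ↦ f x (g x)` is the sum of the two partial contributions. Applied to the gradient map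
`(x, y) ↦ ∇_b L(x, y)` along `b⁰` it gives `Db¹ = (I + α ∇²_{bb}L) Db⁰ + α ∇²_{ab}L`; applied to
`L` along `b¹` and dualized it gives `∂_a L + (Db¹)ᵀ ∇_b L`.
-/

open Function InnerProductSpace

section GraphChainRule

variable {𝕜 E F G : Type*} [NontriviallyNormedField 𝕜]
  [NormedAddCommGroup E] [NormedSpace 𝕜 E] [NormedAddCommGroup F] [NormedSpace 𝕜 F]
  [NormedAddCommGroup G] [NormedSpace 𝕜 G]
  {f : E → F → G} {x : E} {y : F}

theorem fderiv_uncurry_eq_coprod (hf : DifferentiableAt 𝕜 (uncurry f) (x, y)) :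
    fderiv 𝕜 (uncurry f) (x, y) =
      (fderiv 𝕜 (fun x' => f x' y) x).coprod (fderiv 𝕜 (f x) y) := by
  have hleft :
      HasFDerivAt (fun x' => f x' y) ((fderiv 𝕜 (uncurry f) (x, y)).comp (.inl 𝕜 E F)) x :=
    hf.hasFDerivAt.comp (f := fun x' => (x', y)) x (hasFDerivAt_prodMk_left x y)
  have hright :
      HasFDerivAt (f x) ((fderiv 𝕜 (uncurry f) (x, y)).comp (.inr 𝕜 E F)) y :=
    hf.hasFDerivAt.comp (f := fun y' => (x, y')) y (hasFDerivAt_prodMk_right x y)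
  rw [hleft.fderiv, hright.fderiv, ← ContinuousLinearMap.comp_coprod,
    ContinuousLinearMap.coprod_inl_inr, ContinuousLinearMap.comp_id]

theorem hasFDerivAt_uncurry_graph {g : E → F} {g' : E →L[𝕜] F}
    (hf : DifferentiableAt 𝕜 (uncurry f) (x, g x)) (hg : HasFDerivAt g g' x) :
    HasFDerivAt (fun x' => f x' (g x'))
      (fderiv 𝕜 (fun x' => f x' (g x)) x + (fderiv 𝕜 (f x) (g x)).comp g') x := by
  have chain := hf.hasFDerivAt.comp (f := fun x' => (x', g x')) x
    ((hasFDerivAt_id x).prodMk hg)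
  refine chain.congr_fderiv ?_
  ext v
  simp only [fderiv_uncurry_eq_coprod hf, ContinuousLinearMap.comp_apply,
    ContinuousLinearMap.prod_apply, ContinuousLinearMap.coprod_apply,
    ContinuousLinearMap.id_apply, add_apply]

end GraphChainRule

section Gradient

variable {𝕜 E F : Type*} [RCLike 𝕜]
  [NormedAddCommGroup E] [InnerProductSpace 𝕜 E] [CompleteSpace E]
  [NormedAddCommGroup F] [InnerProductSpace 𝕜 F] [CompleteSpace F]

theorem toDual_symm_comp (ℓ : StrongDual 𝕜 F) (T : E →L[𝕜] F) :
    (toDual 𝕜 E).symm (ℓ.comp T) =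
      ContinuousLinearMap.adjoint T ((toDual 𝕜 F).symm ℓ) := by
  refine ext_inner_right 𝕜 fun v => ?_
  rw [ContinuousLinearMap.adjoint_inner_left, toDual_symm_apply, toDual_symm_apply,
    ContinuousLinearMap.comp_apply]

theorem gradient_uncurry_graph {f : E → F → 𝕜} {g : E → F} {g' : E →L[𝕜] F} {x : E}
    (hf : DifferentiableAt 𝕜 (uncurry f) (x, g x)) (hg : HasFDerivAt g g' x) :
    gradient (fun x' => f x' (g x')) x =
      gradient (fun x' => f x' (g x)) x +
        ContinuousLinearMap.adjoint g' (gradient (f x) (g x)) := by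
  simp only [gradient, (hasFDerivAt_uncurry_graph hf hg).fderiv, map_add, toDual_symm_comp]

end Gradient

theorem contDiffAt_gradient_right {E F : Type*} [NormedAddCommGroup E] [NormedSpace ℝ E]
    [NormedAddCommGroup F] [InnerProductSpace ℝ F] [CompleteSpace F]
    {f : E → F → ℝ} {p : E × F} {k r : WithTop ℕ∞}
    (hf : ContDiffAt ℝ r (uncurry f) p) (hkr : k + 1 ≤ r) :
    ContDiffAt ℝ k (uncurry fun x => gradient (f x)) p := by
  -- `ContDiffAt.fderiv` handles a parametrized family; the parameter here is the whole pair.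
  have lifted : ContDiffAt ℝ r (uncurry fun q : E × F => f q.1) (p, p.2) :=
    hf.comp (f := fun q : (E × F) × F => (q.1.1, q.2)) (p, p.2) (by fun_prop)
  exact (toDual ℝ F).symm.contDiff.contDiffAt.comp p (lifted.fderiv contDiffAt_snd hkr)

theorem hasFDerivAt_gradient_step {E F : Type*} [NormedAddCommGroup E] [NormedSpace ℝ E]
    [NormedAddCommGroup F] [InnerProductSpace ℝ F] [CompleteSpace F]
    {L : E → F → ℝ} {b : E → F} {a : E} (α : ℝ)
    (hgrad : DifferentiableAt ℝ (uncurry fun x => gradient (L x)) (a, b a))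
    (hb : DifferentiableAt ℝ b a) :
    HasFDerivAt (fun x => b x + α • gradient (L x) (b x))
      ((ContinuousLinearMap.id ℝ F + α • fderiv ℝ (gradient (L a)) (b a)).comp (fderiv ℝ b a)
        + α • fderiv ℝ (fun x => gradient (L x) (b a)) a) a := by
  refine (hb.hasFDerivAt.add
    ((hasFDerivAt_uncurry_graph hgrad hb.hasFDerivAt).const_smul α)).congr_fderiv ?_
  rw [ContinuousLinearMap.add_comp, ContinuousLinearMap.id_comp, ContinuousLinearMap.smul_comp,
    smul_add]
  abel

theorem stmt_2_general {E F : Type*}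
    [NormedAddCommGroup E] [InnerProductSpace ℝ E] [CompleteSpace E]
    [NormedAddCommGroup F] [InnerProductSpace ℝ F] [CompleteSpace F]
    {L : E → F → ℝ} {α : ℝ} {b0 b1 : E → F} {a : E}
    (hL : DifferentiableAt ℝ (uncurry L) (a, b1 a))
    (hgrad : DifferentiableAt ℝ (uncurry fun x => gradient (L x)) (a, b0 a))
    (hb0 : DifferentiableAt ℝ b0 a)
    (hb1 : ∀ x, b1 x = b0 x + α • gradient (L x) (b0 x)) :
    gradient (fun x => L x (b1 x)) a
      = gradient (fun x => L x (b1 a)) a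
        + ContinuousLinearMap.adjoint (fderiv ℝ b0 a)
            (ContinuousLinearMap.adjoint
                (ContinuousLinearMap.id ℝ F + α • fderiv ℝ (gradient (L a)) (b0 a))
              (gradient (L a) (b1 a)))
        + α • ContinuousLinearMap.adjoint
            (fderiv ℝ (fun x => gradient (L x) (b0 a)) a) (gradient (L a) (b1 a)) := by
  have hb1' := hasFDerivAt_gradient_step α hgrad hb0
  rw [← funext hb1] at hb1'
  rw [gradient_uncurry_graph hL hb1', map_add, ContinuousLinearMap.adjoint_comp,
    map_smulₛₗ, conj_trivial, add_apply, smul_apply,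
    ContinuousLinearMap.comp_apply, add_assoc]

/-- One-step (`K = 1`) semi-amortized variational inference gradient:
for `b¹(a) = b⁰(a) + α ∇_b L(a, b⁰(a))`,
`d/da L(a,b¹(a)) = ∂_a L(a,b¹(a)) + (Db⁰(a))ᵀ(I + α∇²_{bb}L(a,b⁰(a)))ᵀ ∇_b L(a,b¹(a))
  + α (∇²_{ab}L(a,b⁰(a)))ᵀ ∇_b L(a,b¹(a))`. -/
theorem stmt_2 {n m : ℕ}
    (L : EuclideanSpace ℝ (Fin n) → EuclideanSpace ℝ (Fin m) → ℝ)
    (hL : ContDiff ℝ 2 (fun p : EuclideanSpace ℝ (Fin n) × EuclideanSpace ℝ (Fin m) => L p.1 p.2))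
    (α : ℝ) (hα : 0 < α)
    (b0 : EuclideanSpace ℝ (Fin n) → EuclideanSpace ℝ (Fin m))
    (hb0 : Differentiable ℝ b0)
    (b1 : EuclideanSpace ℝ (Fin n) → EuclideanSpace ℝ (Fin m))
    (hb1 : ∀ a, b1 a = b0 a + α • gradient (L a) (b0 a))
    (a : EuclideanSpace ℝ (Fin n)) :
    gradient (fun a' => L a' (b1 a')) a
      = gradient (fun a' => L a' (b1 a)) a
        + (ContinuousLinearMap.adjoint (fderiv ℝ b0 a))
            ((ContinuousLinearMap.adjoint
                (ContinuousLinearMap.id ℝ (EuclideanSpace ℝ (Fin m))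
                  + α • fderiv ℝ (gradient (L a)) (b0 a)))
              (gradient (L a) (b1 a)))
        + α • (ContinuousLinearMap.adjoint
            (fderiv ℝ (fun a' => gradient (L a') (b0 a)) a)) (gradient (L a) (b1 a)) := by
  exact stmt_2_general (hL.contDiffAt.differentiableAt (by norm_num))
    ((contDiffAt_gradient_right hL.contDiffAt (k := 1) (by norm_num)).differentiableAt
      one_ne_zero) (hb0 a) hb1
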